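/- Let μ : ℛ → ℝ((X)) be finitely additive with μ(g K_{i,j}) = (q³/((q²−1)(q−1))) q^{−4i} X^{4j} for every g ∈ GL_2(F) and every (i,j) > (0,0). If c_1, …, c_n, d_1, …, d_m ∈ ℂ((X)) and U_1, …, U_n, V_1, …, V_m ∈ ℛ satisfy ∑_{i=1}^n c_i 𝟙_{U_i}(x) = ∑_{j=1}^m d_j 𝟙_{V_j}(x) for every x ∈ GL_2(F), then ∑_{i=1}^n c_i μ(U_i) = ∑_{j=1}^m d_j μ(V_j) in ℂ((X)). Consequently the assignment ∑_i c_i 𝟙_{U_i} ↦ ∑_i c_i μ(U_i) is a well-defined ℂ((X))-linear functional on the ℂ((X))-span of indicator functions of members of ℛ, and it is left-invariant: for every h ∈ GL_2(F), the function x ↦ f(h⁻¹x) has the same value of the functional as f. -/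

import Mathlib

/-!
The distinguished sets are left cosets of a chain of subgroups `K_{i,j}`, totally ordered by
inclusion, so two of them are disjoint or nested; in particular they are closed under intersection
(`Dist2.inter`).

Well-definedness uses only that `ℛ` is a ring of sets and that `μ` is additive. If
`∑ cᵢ 𝟙_{Uᵢ}` is constantly `k` on a member `A` of `ℛ`, then `∑ cᵢ μ(Uᵢ ∩ A) = k μ(A)`; this follows
by induction on the number of sets, splitting `A` along one of them (`sum_mul_inter_eq`).
Taking `A` to be the union of all the sets involved gives `sum_mul_eq_of_indicator_eq`.

For left-invariance it is enough that `μ(hA) = μ(A)` for `A ∈ ℛ`. The span of the indicators of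
distinguished sets is closed under products, so it contains the indicator of every member of `ℛ`
(`RMem.indicator_mem_span`). Thus `𝟙_A = ∑ zₖ 𝟙_{Dₖ}` with `Dₖ` distinguished, and translating,
`𝟙_{hA} = ∑ zₖ 𝟙_{hDₖ}`. Well-definedness gives `μ(A) = ∑ zₖ μ(Dₖ)` and `μ(hA) = ∑ zₖ μ(hDₖ)`, and
`μ(hDₖ) = μ(Dₖ)` by the prescribed values on cosets (`mu_lmul`).
-/

open Matrix

noncomputable section

/-- The lexicographic-from-the-right (non-strict) order on `ℤ × ℤ`:
`(i,j) ≤ (m,n)` iff `j < n`, or `j = n` and `i ≤ m`. -/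
def RLex (a b : ℤ × ℤ) : Prop := a.2 < b.2 ∨ (a.2 = b.2 ∧ a.1 ≤ b.1)

/-- The lexicographic-from-the-right strict order on `ℤ × ℤ`:
`(i,j) < (m,n)` iff `j < n`, or `j = n` and `i < m`. -/
def RLt (a b : ℤ × ℤ) : Prop := a.2 < b.2 ∨ (a.2 = b.2 ∧ a.1 < b.1)

/-- The left translate `g • A` of a subset `A` of a group. -/
def lmul {G : Type*} [Group G] (g : G) (A : Set G) : Set G := (fun x => g * x) '' A

/-- The set `K_{i,j} = I₂ + t₁^i t₂^j M₂(O_F)` inside `GL₂(F)` (a subgroup when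
`(i,j) > (0,0)`). -/
def Kmat {F : Type*} [Field F] (O : Subring F) (t1 t2 : F) (i j : ℤ) :
    Set (GL (Fin 2) F) :=
  {g | ∀ a b : Fin 2, ∃ c ∈ O,
    (g : Matrix (Fin 2) (Fin 2) F) a b
      = (1 : Matrix (Fin 2) (Fin 2) F) a b + t1 ^ i * t2 ^ j * c}

/-- Distinguished subsets of `GL₂(F)`: the empty set and the left cosets `g K_{i,j}`
with `(i,j) > (0,0)`. -/
def Dist2 {F : Type*} [Field F] (O : Subring F) (t1 t2 : F)
    (D : Set (GL (Fin 2) F)) : Prop :=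
  D = ∅ ∨ ∃ (g : GL (Fin 2) F) (i j : ℤ), RLt (0, 0) (i, j) ∧ D = lmul g (Kmat O t1 t2 i j)

/-- The ring `ℛ` of subsets of `GL₂(F)`: the smallest collection containing all
distinguished sets and closed under binary unions, intersections and differences. -/
inductive RMem {F : Type*} [Field F] (O : Subring F) (t1 t2 : F) :
    Set (GL (Fin 2) F) → Prop
  | dist (D : Set (GL (Fin 2) F)) : Dist2 O t1 t2 D → RMem O t1 t2 D
  | union (A B : Set (GL (Fin 2) F)) : RMem O t1 t2 A → RMem O t1 t2 B → RMem O t1 t2 (A ∪ B)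
  | inter (A B : Set (GL (Fin 2) F)) : RMem O t1 t2 A → RMem O t1 t2 B → RMem O t1 t2 (A ∩ B)
  | diff (A B : Set (GL (Fin 2) F)) : RMem O t1 t2 A → RMem O t1 t2 B → RMem O t1 t2 (A \ B)

/-- The set `K = GL₂(O_F)`: matrices whose entries, together with the entries of the
inverse matrix, lie in the rank-two ring of integers `O_F`. -/
def GLO {F : Type*} [Field F] (O : Subring F) : Set (GL (Fin 2) F) :=
  {g | (∀ a b : Fin 2, (g : Matrix (Fin 2) (Fin 2) F) a b ∈ O) ∧
    ∀ a b : Fin 2, ((g⁻¹ : GL (Fin 2) F) : Matrix (Fin 2) (Fin 2) F) a b ∈ O}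

/-! ### Finitely additive functions on a ring of sets -/

section Additive

variable {α L : Type*} [CommRing L] {R : Set α → Prop} {mu : Set α → L}

/-- Local form of well-definedness: integrating over `A` a simple function that is constant
on `A`. -/
lemma sum_mul_inter_eq (h0 : R ∅) (hi : ∀ A B, R A → R B → R (A ∩ B))
    (hd : ∀ A B, R A → R B → R (A \ B))
    (hadd : ∀ A B, R A → R B → Disjoint A B → mu (A ∪ B) = mu A + mu B)
    {ι : Type*} (s : Finset ι) (c : ι → L) (U : ι → Set α) (hU : ∀ i, R (U i)) :
    ∀ (A : Set α) (k : L), R A → (∀ x ∈ A, ∑ i ∈ s, (U i).indicator (fun _ => c i) x = k) →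
      ∑ i ∈ s, c i * mu (U i ∩ A) = k * mu A := by
  classical
  have hempty : mu ∅ = 0 := by simpa using hadd ∅ ∅ h0 h0 (by simp)
  have hsplit : ∀ A B, R A → R B → mu A = mu (A ∩ B) + mu (A \ B) := by
    intro A B hA hB
    rw [← hadd _ _ (hi _ _ hA hB) (hd _ _ hA hB) Set.disjoint_sdiff_inter.symm,
      Set.inter_union_sdiff]
  induction s using Finset.induction_on with
  | empty =>
    intro A k _ h
    rcases A.eq_empty_or_nonempty with rfl | ⟨x, hx⟩
    · simp [hempty]
    · have := h x hx
      simp at this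
      simp [← this]
  | insert a s ha ih =>
    intro A k hA h
    have h1 := ih (A ∩ U a) (k - c a) (hi _ _ hA (hU a)) (by
      intro x hx
      have := h x hx.1
      rw [Finset.sum_insert ha, Set.indicator_of_mem hx.2] at this
      rw [← this]; ring)
    have h2 := ih (A \ U a) k (hd _ _ hA (hU a)) (by
      intro x hx
      have := h x hx.1
      rwa [Finset.sum_insert ha, Set.indicator_of_notMem hx.2, zero_add] at this)
    have h3 : ∑ i ∈ s, c i * mu (U i ∩ A)
        = ∑ i ∈ s, c i * mu (U i ∩ (A ∩ U a)) + ∑ i ∈ s, c i * mu (U i ∩ (A \ U a)) := by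
      rw [← Finset.sum_add_distrib]
      refine Finset.sum_congr rfl fun i _ => ?_
      rw [hsplit _ _ (hi _ _ (hU i) hA) (hU a), Set.inter_assoc, Set.inter_sdiff_assoc, mul_add]
    rw [Finset.sum_insert ha, h3, h1, h2, hsplit A _ hA (hU a), Set.inter_comm (U a) A]
    ring

lemma sum_mul_eq_of_indicator_eq (h0 : R ∅) (hu : ∀ A B, R A → R B → R (A ∪ B))
    (hi : ∀ A B, R A → R B → R (A ∩ B)) (hd : ∀ A B, R A → R B → R (A \ B))
    (hadd : ∀ A B, R A → R B → Disjoint A B → mu (A ∪ B) = mu A + mu B)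
    {ι κ : Type*} [Fintype ι] [Fintype κ] (c : ι → L) (d : κ → L) (U : ι → Set α)
    (V : κ → Set α) (hU : ∀ i, R (U i)) (hV : ∀ j, R (V j))
    (heq : ∀ x, ∑ i, (U i).indicator (fun _ => c i) x = ∑ j, (V j).indicator (fun _ => d j) x) :
    ∑ i, c i * mu (U i) = ∑ j, d j * mu (V j) := by
  classical
  let T : ι ⊕ κ → Set α := Sum.elim U V
  let e : ι ⊕ κ → L := Sum.elim c (fun j => - d j)
  have hT : ∀ i, R (T i) := by rintro (i | j); exacts [hU i, hV j]
  have hun : ∀ s : Finset (ι ⊕ κ), R (⋃ i ∈ s, T i) := by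
    intro s
    induction s using Finset.induction_on with
    | empty => simpa using h0
    | insert a s _ ih =>
      rw [Finset.set_biUnion_insert]
      exact hu _ _ (hT a) ih
  have key := sum_mul_inter_eq h0 hi hd hadd Finset.univ e T hT _ 0 (hun Finset.univ) (by
    intro x _
    have hneg : ∀ j, (V j).indicator (fun _ => - d j) x = -(V j).indicator (fun _ => d j) x := by
      intro j
      by_cases hx : x ∈ V j <;> simp [hx]
    simp only [Fintype.sum_sum_type, T, e, Sum.elim_inl, Sum.elim_inr, hneg, heq,
      Finset.sum_neg_distrib, add_neg_cancel])
  have hsub : ∀ i, T i ∩ (⋃ i ∈ (Finset.univ : Finset (ι ⊕ κ)), T i) = T i := fun i =>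
    Set.inter_eq_left.2 (Set.subset_biUnion_of_mem (u := T) (Finset.mem_coe.2 (Finset.mem_univ i)))
  simp only [hsub, zero_mul, Fintype.sum_sum_type, T, e, Sum.elim_inl, Sum.elim_inr,
    neg_mul, Finset.sum_neg_distrib] at key
  exact add_neg_eq_zero.1 key

end Additive

/-! ### Left translation -/

lemma lmul_lmul {G : Type*} [Group G] (h g : G) (A : Set G) :
    lmul h (lmul g A) = lmul (h * g) A := by
  simp only [lmul, Set.image_image, mul_assoc]

lemma mem_lmul {G : Type*} [Group G] {g x : G} {A : Set G} :
    x ∈ lmul g A ↔ g⁻¹ * x ∈ A := by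
  simp [lmul]

lemma indicator_lmul {G L : Type*} [Group G] [Zero L] (h : G) (A : Set G) (c : L) (x : G) :
    (lmul h A).indicator (fun _ => c) x = A.indicator (fun _ => c) (h⁻¹ * x) := by
  by_cases hx : h⁻¹ * x ∈ A
  · rw [Set.indicator_of_mem hx, Set.indicator_of_mem (mem_lmul.2 hx)]
  · rw [Set.indicator_of_notMem hx, Set.indicator_of_notMem (mt mem_lmul.1 hx)]

section Ring

variable {F : Type*} [Field F] {O : Subring F} {t1 t2 : F}

lemma Dist2.lmul {D : Set (GL (Fin 2) F)} (hD : Dist2 O t1 t2 D) (h : GL (Fin 2) F) :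
    Dist2 O t1 t2 (lmul h D) := by
  rcases hD with rfl | ⟨g, i, j, hij, rfl⟩
  · left; simp [_root_.lmul]
  · exact Or.inr ⟨h * g, i, j, hij, lmul_lmul _ _ _⟩

lemma RMem.lmul {A : Set (GL (Fin 2) F)} (hA : RMem O t1 t2 A) (h : GL (Fin 2) F) :
    RMem O t1 t2 (lmul h A) := by
  have hinj : Function.Injective (fun x : GL (Fin 2) F => h * x) := mul_right_injective h
  induction hA with
  | dist D hD => exact .dist _ (hD.lmul h)
  | union A B _ _ iA iB =>
    rw [_root_.lmul, Set.image_union]; exact .union _ _ iA iB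
  | inter A B _ _ iA iB =>
    rw [_root_.lmul, Set.image_inter hinj]; exact .inter _ _ iA iB
  | diff A B _ _ iA iB =>
    rw [_root_.lmul, Set.image_sdiff hinj]; exact .diff _ _ iA iB

/-! ### The congruence subgroups -/

/-- `K_{i,j}` is closed under multiplication as soon as `t₁^i t₂^j` is integral. -/
lemma Kmat_mul {i j : ℤ} (ht : t1 ^ i * t2 ^ j ∈ O) {g h : GL (Fin 2) F}
    (hg : g ∈ Kmat O t1 t2 i j) (hh : h ∈ Kmat O t1 t2 i j) : g * h ∈ Kmat O t1 t2 i j := by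
  intro a b
  choose M hM hgM using hg
  choose N hN hhN using hh
  set t := t1 ^ i * t2 ^ j with htdef
  refine ⟨M a b + N a b + t * (M a 0 * N 0 b + M a 1 * N 1 b), ?_, ?_⟩
  · exact O.add_mem (O.add_mem (hM _ _) (hN _ _)) (O.mul_mem ht
      (O.add_mem (O.mul_mem (hM _ _) (hN _ _)) (O.mul_mem (hM _ _) (hN _ _))))
  · rw [Units.val_mul, Matrix.mul_apply, Fin.sum_univ_two, hgM, hgM, hhN, hhN]
    fin_cases a <;> fin_cases b <;> simp [Matrix.one_apply] <;> ring

/-- If `t = t₁^i t₂^j` lies in the maximal ideal, an element of `K_{i,j}` has determinant in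
`1 + tO`, a unit of `O`, so its inverse is integral, and then `g⁻¹ - 1 = -g⁻¹ (g - 1)` is divisible
by `t`. -/
lemma Kmat_inv [IsLocalRing O] {i j : ℤ} (ht : t1 ^ i * t2 ^ j ∈ O)
    (htu : ¬ IsUnit (⟨_, ht⟩ : O)) {g : GL (Fin 2) F}
    (hg : g ∈ Kmat O t1 t2 i j) : g⁻¹ ∈ Kmat O t1 t2 i j := by
  choose M hM hgM using hg
  set t := t1 ^ i * t2 ^ j with htdef
  set s : F := M 0 0 + M 1 1 + t * (M 0 0 * M 1 1 - M 0 1 * M 1 0) with hs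
  have hsO : s ∈ O := O.add_mem (O.add_mem (hM _ _) (hM _ _)) (O.mul_mem ht
    (O.sub_mem (O.mul_mem (hM _ _) (hM _ _)) (O.mul_mem (hM _ _) (hM _ _))))
  have hdet : (g : Matrix (Fin 2) (Fin 2) F).det = 1 + t * s := by
    rw [Matrix.det_fin_two, hgM, hgM, hgM, hgM]
    simp [hs]; ring
  obtain ⟨u, huO, hu⟩ : ∃ u ∈ O, (1 + t * s) * u = 1 := by
    have hun : IsUnit (1 + ⟨t, ht⟩ * ⟨s, hsO⟩ : O) := by
      rcases IsLocalRing.isUnit_or_isUnit_of_add_one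
        (a := (1 + ⟨t, ht⟩ * ⟨s, hsO⟩ : O)) (b := -(⟨t, ht⟩ * ⟨s, hsO⟩)) (by ring) with h | h
      · exact h
      · exact absurd (isUnit_of_mul_isUnit_left (IsUnit.neg_iff _ |>.1 h)) htu
    obtain ⟨w, hw⟩ := hun.exists_right_inv
    exact ⟨w, w.2, by simpa using congrArg Subtype.val hw⟩
  have hgO : ∀ a b, (g : Matrix (Fin 2) (Fin 2) F) a b ∈ O := by
    intro a b
    rw [hgM]
    refine O.add_mem ?_ (O.mul_mem ht (hM _ _))
    rw [Matrix.one_apply]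
    split_ifs
    exacts [O.one_mem, O.zero_mem]
  have hinvO : ∀ a b, ((g⁻¹ : GL (Fin 2) F) : Matrix (Fin 2) (Fin 2) F) a b ∈ O := by
    have hadj : ((g⁻¹ : GL (Fin 2) F) : Matrix (Fin 2) (Fin 2) F)
        = u • (g : Matrix (Fin 2) (Fin 2) F).adjugate := by
      rw [Matrix.coe_units_inv]
      refine Matrix.inv_eq_right_inv ?_
      rw [Matrix.mul_smul, Matrix.mul_adjugate, hdet, smul_smul, mul_comm u, hu, one_smul]
    intro a b
    rw [hadj, Matrix.adjugate_fin_two, Matrix.smul_apply, smul_eq_mul]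
    refine O.mul_mem huO ?_
    fin_cases a <;> fin_cases b <;> simp [hgO]
  have hinv : ((g⁻¹ : GL (Fin 2) F) : Matrix (Fin 2) (Fin 2) F) * g = 1 := by
    rw [← Units.val_mul, inv_mul_cancel, Units.val_one]
  set N := ((g⁻¹ : GL (Fin 2) F) : Matrix (Fin 2) (Fin 2) F) with hN
  intro a b
  refine ⟨-(N a 0 * M 0 b + N a 1 * M 1 b), O.neg_mem (O.add_mem (O.mul_mem (hinvO _ _) (hM _ _))
    (O.mul_mem (hinvO _ _) (hM _ _))), ?_⟩
  have := congrFun (congrFun hinv a) b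
  rw [Matrix.mul_apply, Fin.sum_univ_two, hgM, hgM] at this
  rw [← this, ← hN, ← htdef]
  fin_cases b <;> simp [Matrix.one_apply] <;> ring

lemma Kmat_anti {i j k l : ℤ} {u : F} (hu : u ∈ O)
    (h : t1 ^ k * t2 ^ l = t1 ^ i * t2 ^ j * u) : Kmat O t1 t2 k l ⊆ Kmat O t1 t2 i j := by
  intro g hg a b
  obtain ⟨c, hc, e⟩ := hg a b
  exact ⟨u * c, O.mul_mem hu hc, by rw [e, h]; ring⟩

/-- Distinguished sets form a π-system, given that the `K_{i,j}` are a chain of subgroups. -/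
lemma Dist2.inter
    (hmul : ∀ i j : ℤ, RLt (0, 0) (i, j) → ∀ g h, g ∈ Kmat O t1 t2 i j →
      h ∈ Kmat O t1 t2 i j → g * h ∈ Kmat O t1 t2 i j)
    (hinv : ∀ i j : ℤ, RLt (0, 0) (i, j) → ∀ g, g ∈ Kmat O t1 t2 i j →
      g⁻¹ ∈ Kmat O t1 t2 i j)
    (hanti : ∀ i j k l : ℤ, RLex (i, j) (k, l) → Kmat O t1 t2 k l ⊆ Kmat O t1 t2 i j)
    {A B : Set (GL (Fin 2) F)} (hA : Dist2 O t1 t2 A) (hB : Dist2 O t1 t2 B) :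
    Dist2 O t1 t2 (A ∩ B) := by
  rcases hA with rfl | ⟨g, i, j, hij, rfl⟩
  · left; simp
  rcases hB with rfl | ⟨h, k, l, hkl, rfl⟩
  · left; simp
  rcases Set.eq_empty_or_nonempty (_root_.lmul g (Kmat O t1 t2 i j) ∩ _root_.lmul h (Kmat O t1 t2 k l))
    with he | ⟨x, hx1, hx2⟩
  · exact Or.inl he
  right
  -- A coset is represented by any of its elements.
  have hrep : ∀ (i j : ℤ) (_ : RLt (0, 0) (i, j)) (g x : GL (Fin 2) F),
      x ∈ _root_.lmul g (Kmat O t1 t2 i j) →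
      _root_.lmul g (Kmat O t1 t2 i j) = _root_.lmul x (Kmat O t1 t2 i j) := by
    intro i j hij g x hx
    rw [mem_lmul] at hx
    ext y
    rw [mem_lmul, mem_lmul]
    constructor <;> intro hy
    · simpa [mul_assoc] using hmul i j hij _ _ (hinv i j hij _ hx) hy
    · simpa [mul_assoc] using hmul i j hij _ _ hx hy
  rw [hrep i j hij g x hx1, hrep k l hkl h x hx2]
  have htot : RLex (i, j) (k, l) ∨ RLex (k, l) (i, j) := by
    simp only [RLex]; omega
  rcases htot with hh | hh
  · exact ⟨x, k, l, hkl, Set.inter_eq_right.2 (Set.image_mono (hanti _ _ _ _ hh))⟩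
  · exact ⟨x, i, j, hij, Set.inter_eq_left.2 (Set.image_mono (hanti _ _ _ _ hh))⟩

/-! ### Left-invariance -/

/-- The span of the indicators of a π-system of sets is stable under products, hence contains the
indicators of all sets in the generated ring. -/
lemma RMem.indicator_mem_span {L : Type*} [CommRing L]
    (hinter : ∀ A B, Dist2 O t1 t2 A → Dist2 O t1 t2 B → Dist2 O t1 t2 (A ∩ B))
    {A : Set (GL (Fin 2) F)} (hA : RMem O t1 t2 A) :
    A.indicator (1 : GL (Fin 2) F → L) ∈
      Submodule.span L {f | ∃ D, Dist2 O t1 t2 D ∧ f = D.indicator (1 : GL (Fin 2) F → L)} := by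
  set S : Set (GL (Fin 2) F → L) :=
    {f | ∃ D, Dist2 O t1 t2 D ∧ f = D.indicator (1 : GL (Fin 2) F → L)} with hS
  have hmul : ∀ f g, f ∈ Submodule.span L S → g ∈ Submodule.span L S →
      f * g ∈ Submodule.span L S := by
    intro f g hf hg
    have h := Submodule.mul_mem_mul hf hg
    rw [Submodule.span_mul_span] at h
    refine Submodule.span_mono ?_ h
    rintro _ ⟨_, ⟨D, hD, rfl⟩, _, ⟨E, hE, rfl⟩, rfl⟩
    exact ⟨D ∩ E, hinter D E hD hE, (Set.inter_indicator_one).symm⟩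
  induction hA with
  | dist D hD => exact Submodule.subset_span ⟨D, hD, rfl⟩
  | union A B _ _ iA iB =>
    have : (A ∪ B).indicator (1 : GL (Fin 2) F → L)
        = A.indicator 1 + B.indicator 1 - A.indicator 1 * B.indicator 1 := by
      ext x
      by_cases hx : x ∈ A <;> by_cases hy : x ∈ B <;> simp [hx, hy]
    rw [this]
    exact Submodule.sub_mem _ (Submodule.add_mem _ iA iB) (hmul _ _ iA iB)
  | inter A B _ _ iA iB =>
    rw [Set.inter_indicator_one]
    exact hmul _ _ iA iB
  | diff A B _ _ iA iB =>
    have : (A \ B).indicator (1 : GL (Fin 2) F → L)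
        = A.indicator 1 - A.indicator 1 * B.indicator 1 := by
      ext x
      by_cases hx : x ∈ A <;> by_cases hy : x ∈ B <;> simp [hx, hy]
    rw [this]
    exact Submodule.sub_mem _ iA (hmul _ _ iA iB)

lemma RMem.empty : RMem O t1 t2 (∅ : Set (GL (Fin 2) F)) := .dist _ (Or.inl rfl)

/-- An additive function on `ℛ` that is left-invariant on distinguished sets is left-invariant. -/
lemma mu_lmul {L : Type*} [CommRing L] {mu : Set (GL (Fin 2) F) → L}
    (hinter : ∀ A B, Dist2 O t1 t2 A → Dist2 O t1 t2 B → Dist2 O t1 t2 (A ∩ B))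
    (hadd : ∀ A B : Set (GL (Fin 2) F), RMem O t1 t2 A → RMem O t1 t2 B → Disjoint A B →
      mu (A ∪ B) = mu A + mu B)
    (h : GL (Fin 2) F) (hmu : ∀ D, Dist2 O t1 t2 D → mu (lmul h D) = mu D)
    {A : Set (GL (Fin 2) F)} (hA : RMem O t1 t2 A) : mu (lmul h A) = mu A := by
  obtain ⟨n, z, f, hf⟩ := Submodule.mem_span_set'.1 (hA.indicator_mem_span (L := L) hinter)
  choose D hD hfD using fun k => (f k).2
  have hpt : ∀ x, ∑ k, (D k).indicator (fun _ => z k) x = A.indicator (fun _ => (1 : L)) x := by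
    intro x
    have hx := congrFun hf x
    rw [Finset.sum_apply] at hx
    refine Eq.trans (Finset.sum_congr rfl fun k _ => ?_) hx
    rw [Pi.smul_apply, hfD]
    by_cases hxk : x ∈ D k <;> simp [hxk]
  have e1 := sum_mul_eq_of_indicator_eq (R := RMem O t1 t2) RMem.empty .union .inter .diff hadd
    z (fun _ : Fin 1 => (1 : L)) D (fun _ => A) (fun k => .dist _ (hD k)) (fun _ => hA)
    (fun x => by simpa using hpt x)
  have e2 := sum_mul_eq_of_indicator_eq (R := RMem O t1 t2) RMem.empty .union .inter .diff hadd
    z (fun _ : Fin 1 => (1 : L)) (fun k => lmul h (D k)) (fun _ => lmul h A)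
    (fun k => .dist _ ((hD k).lmul h)) (fun _ => hA.lmul h)
    (fun x => by simpa [indicator_lmul] using hpt (h⁻¹ * x))
  simp only [hmu _ (hD _)] at e2
  simpa using e2.symm.trans e1

end Ring

/-! ### The monomials `t₁^i t₂^j` and the functional -/

/-- If `μ` is finitely additive on `ℛ` with
`μ(g K_{i,j}) = (q³/((q²−1)(q−1))) q^{−4i} X^{4j}`, then the assignment
`∑ᵢ cᵢ 𝟙_{Uᵢ} ↦ ∑ᵢ cᵢ μ(Uᵢ)` is a well-defined, left-invariant `ℂ((X))`-valued linear
functional on the span of indicator functions of members of `ℛ`. -/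
theorem statement4
    {F : Type*} [Field F] (v : F → ℤ × ℤ)
    (hv_mul : ∀ x y : F, x ≠ 0 → y ≠ 0 → v (x * y) = v x + v y)
    (hv_add : ∀ x y : F, x ≠ 0 → y ≠ 0 → x + y ≠ 0 →
      RLex (v x) (v (x + y)) ∨ RLex (v y) (v (x + y)))
    (hv_surj : ∀ p : ℤ × ℤ, ∃ x : F, x ≠ 0 ∧ v x = p)
    (O : Subring F) (hO : ∀ x : F, x ∈ O ↔ x = 0 ∨ RLex (0, 0) (v x))
    (t1 t2 : F) (ht1 : t1 ≠ 0) (ht2 : t2 ≠ 0)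
    (hvt1 : v t1 = (1, 0)) (hvt2 : v t2 = (0, 1))
    [IsLocalRing ↥O] [Finite (IsLocalRing.ResidueField ↥O)] (q : ℕ)
    (hq : Nat.card (IsLocalRing.ResidueField ↥O) = q)
    (mu : Set (GL (Fin 2) F) → LaurentSeries ℝ)
    (hadd : ∀ A B : Set (GL (Fin 2) F), RMem O t1 t2 A → RMem O t1 t2 B → Disjoint A B →
      mu (A ∪ B) = mu A + mu B)
    (hval : ∀ (g : GL (Fin 2) F) (i j : ℤ), RLt (0, 0) (i, j) →
      mu (lmul g (Kmat O t1 t2 i j))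
        = HahnSeries.single (4 * j)
            ((q : ℝ) ^ 3 / (((q : ℝ) ^ 2 - 1) * ((q : ℝ) - 1)) * (q : ℝ) ^ (-(4 * i))))
    (n m : ℕ) (c : Fin n → LaurentSeries ℂ) (d : Fin m → LaurentSeries ℂ)
    (U : Fin n → Set (GL (Fin 2) F)) (V : Fin m → Set (GL (Fin 2) F))
    (hU : ∀ i, RMem O t1 t2 (U i)) (hV : ∀ j, RMem O t1 t2 (V j))
    (heq : ∀ x : GL (Fin 2) F,
      ∑ i, Set.indicator (U i) (fun _ => c i) x = ∑ j, Set.indicator (V j) (fun _ => d j) x) :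
    (∑ i, c i * (mu (U i)).map (algebraMap ℝ ℂ)
        = ∑ j, d j * (mu (V j)).map (algebraMap ℝ ℂ)) ∧
    (∀ (h : GL (Fin 2) F) (p : ℕ) (e : Fin p → LaurentSeries ℂ)
        (W : Fin p → Set (GL (Fin 2) F)), (∀ k, RMem O t1 t2 (W k)) →
      (∀ x : GL (Fin 2) F,
        ∑ k, Set.indicator (W k) (fun _ => e k) x
          = ∑ i, Set.indicator (U i) (fun _ => c i) (h⁻¹ * x)) →
      ∑ k, e k * (mu (W k)).map (algebraMap ℝ ℂ)
        = ∑ i, c i * (mu (U i)).map (algebraMap ℝ ℂ)) := by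
  have hv1 : v 1 = 0 := by
    have := hv_mul 1 1 one_ne_zero one_ne_zero
    rw [mul_one] at this
    exact left_eq_add.1 this
  have hvz : ∀ (x : F) (_ : x ≠ 0) (n : ℤ), v (x ^ n) = n • v x := by
    intro x hx n
    induction n with
    | zero => simp [hv1]
    | succ n ih => rw [zpow_add_one₀ hx, hv_mul _ _ (zpow_ne_zero _ hx) hx, ih, add_smul, one_smul]
    | pred n ih =>
      have := hv_mul (x ^ (-(n : ℤ) - 1)) x (zpow_ne_zero _ hx) hx
      rw [← zpow_add_one₀ hx, sub_add_cancel, ih] at this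
      rw [sub_smul, one_smul, this, add_sub_cancel_right]
  have hne : ∀ i j : ℤ, t1 ^ i * t2 ^ j ≠ 0 := fun i j =>
    mul_ne_zero (zpow_ne_zero _ ht1) (zpow_ne_zero _ ht2)
  have hvt : ∀ i j : ℤ, v (t1 ^ i * t2 ^ j) = (i, j) := by
    intro i j
    rw [hv_mul _ _ (zpow_ne_zero _ ht1) (zpow_ne_zero _ ht2), hvz _ ht1, hvz _ ht2, hvt1, hvt2]
    ext <;> simp
  have htO : ∀ i j : ℤ, RLex (0, 0) (i, j) → t1 ^ i * t2 ^ j ∈ O := fun i j h =>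
    (hO _).2 (Or.inr (by rwa [hvt]))
  have hle : ∀ i j : ℤ, RLt (0, 0) (i, j) → RLex (0, 0) (i, j) := by
    intro i j h
    simp only [RLt, RLex] at *
    omega
  have htu : ∀ (i j : ℤ) (h : RLt (0, 0) (i, j)),
      ¬ IsUnit (⟨_, htO i j (hle i j h)⟩ : O) := by
    intro i j h hun
    obtain ⟨w, hw⟩ := hun.exists_right_inv
    have hw' : t1 ^ i * t2 ^ j * (w : F) = 1 := by simpa using congrArg Subtype.val hw
    have hw0 : (w : F) ≠ 0 := by
      intro h0
      simp [h0] at hw'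
    have hvw := hv_mul _ _ (hne i j) hw0
    rw [hw', hv1, hvt] at hvw
    have hwO := ((hO _).1 w.2).resolve_left hw0
    have a1 := congrArg Prod.fst hvw
    have a2 := congrArg Prod.snd hvw
    simp only [RLt, RLex, Prod.fst_zero, Prod.snd_zero, Prod.fst_add, Prod.snd_add] at h hwO a1 a2
    omega
  have hanti : ∀ i j k l : ℤ, RLex (i, j) (k, l) → Kmat O t1 t2 k l ⊆ Kmat O t1 t2 i j := by
    intro i j k l h
    refine Kmat_anti (htO (k - i) (l - j) ?_) ?_
    · simp only [RLex] at *
      omega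
    · rw [zpow_sub₀ ht1, zpow_sub₀ ht2]
      field_simp
  have hinter : ∀ A B, Dist2 O t1 t2 A → Dist2 O t1 t2 B → Dist2 O t1 t2 (A ∩ B) :=
    fun A B => Dist2.inter (fun i j h _ _ => Kmat_mul (htO i j (hle i j h)))
      (fun i j h _ => Kmat_inv (htO i j (hle i j h)) (htu i j h)) hanti
  have hinvariant : ∀ (h : GL (Fin 2) F) (A : Set (GL (Fin 2) F)), RMem O t1 t2 A →
      mu (lmul h A) = mu A := by
    intro h A hA
    refine mu_lmul hinter hadd h ?_ hA
    rintro D (rfl | ⟨g, i, j, hij, rfl⟩)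
    · simp [lmul]
    · rw [lmul_lmul, hval _ _ _ hij, hval _ _ _ hij]
  have hadd' : ∀ A B : Set (GL (Fin 2) F), RMem O t1 t2 A → RMem O t1 t2 B → Disjoint A B →
      (mu (A ∪ B)).map (algebraMap ℝ ℂ)
        = (mu A).map (algebraMap ℝ ℂ) + (mu B).map (algebraMap ℝ ℂ) := by
    intro A B hA hB hAB
    rw [hadd A B hA hB hAB]
    ext k
    simp
  refine ⟨sum_mul_eq_of_indicator_eq (R := RMem O t1 t2)
    (mu := fun A => (mu A).map (algebraMap ℝ ℂ))
    RMem.empty .union .inter .diff hadd' c d U V hU hV heq, ?_⟩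
  intro h p e W hW hWU
  have := sum_mul_eq_of_indicator_eq (R := RMem O t1 t2)
    (mu := fun A => (mu A).map (algebraMap ℝ ℂ))
    RMem.empty .union .inter .diff hadd' e c W (fun i => lmul h (U i)) hW
    (fun i => (hU i).lmul h) (fun x => by simpa only [indicator_lmul] using hWU x)
  simpa only [hinvariant h _ (hU _)] using this
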